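/- Let σ be a saturation function and for ε>0 define the time-varying vector field f_ε(t,z) = b_ε(t)·σ(b_ε(t)ᵀz) on ℝ₊×ℝ², where b_ε(t) = R_{−2πt/ε}e₂. Then for every 0≤a<c, the averages (1/(c−a))·∫_a^c f_ε(t,z) dt converge to f(z) as ε→0⁺, uniformly with respect to z∈ℝ²; that is, sup_{z∈ℝ²} ‖(1/(c−a))·∫_a^c b_ε(t)·σ(b_ε(t)ᵀz) dt − f(z)‖ → 0 as ε→0⁺. -/

import Mathlib

/-!
The integrand `t ↦ b_ε(t) σ(b_ε(t)ᵀ z)` is `ε`-periodic and bounded by `sup |σ|`. After subtracting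
its mean over a period, whole periods contribute nothing to the integral over `[a, c]`, so only a
piece of length at most `ε` is left and the average over `[a, c]` is within `2 ε sup |σ| / (c - a)`
of the mean, uniformly in `z`. The mean is `f z`: with angles measured from a direction orthogonal
to `z`, the component along `z` is `(2π)⁻¹ ∫₀^{2π} sin θ σ(‖z‖ sin θ) dθ = S(‖z‖)`, and the
component orthogonal to `z` is cancelled by the reflection `θ ↦ π - θ`.
-/

open Real Filter MeasureTheory intervalIntegral RealInnerProductSpace

noncomputable section

/-- A saturation function: odd, globally Lipschitz, sign-definite, with finite positive limits
of `σ` at `+∞` and of `σ ξ / ξ` at `0`, non-decreasing, differentiable on `(0,∞)` with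
non-increasing derivative there. -/
def IsSaturation (σ : ℝ → ℝ) : Prop :=
  (∀ ξ, σ (-ξ) = -σ ξ) ∧
  (∃ L : NNReal, LipschitzWith L σ) ∧
  (∀ ξ : ℝ, ξ ≠ 0 → σ ξ * ξ > 0) ∧
  (∃ l > 0, Tendsto σ atTop (nhds l)) ∧
  (∃ l > 0, Tendsto (fun ξ => σ ξ / ξ) (nhdsWithin 0 {(0:ℝ)}ᶜ) (nhds l)) ∧
  Monotone σ ∧
  DifferentiableOn ℝ σ (Set.Ioi 0) ∧
  AntitoneOn (deriv σ) (Set.Ioi 0)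

/-- The modified saturation function `S` associated with `σ`:
`S ξ = (2/π) ∫_0^{π/2} sin v · σ(ξ sin v) dv`. -/
def modSat (σ : ℝ → ℝ) (ξ : ℝ) : ℝ :=
  (2 / Real.pi) * ∫ v in (0:ℝ)..(Real.pi / 2), Real.sin v * σ (ξ * Real.sin v)

abbrev E2 := EuclideanSpace ℝ (Fin 2)

open Classical in
/-- The radial vector field `f(z) = S(‖z‖) z / ‖z‖`, `f(0) = 0`. -/
def fvec (σ : ℝ → ℝ) (z : E2) : E2 :=
  if z = 0 then 0 else (modSat σ ‖z‖ / ‖z‖) • z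

/-- `b_ε(t) = R_{-2πt/ε} e₂ = (sin(2πt/ε), cos(2πt/ε))`. -/
def bvp (ε t : ℝ) : E2 :=
  (WithLp.equiv 2 (Fin 2 → ℝ)).symm ![Real.sin (2 * Real.pi * t / ε), Real.cos (2 * Real.pi * t / ε)]

section PeriodicAverage

variable {E : Type*} [NormedAddCommGroup E] [NormedSpace ℝ E] {g : ℝ → E} {T M : ℝ}

theorem norm_intervalIntegral_le_of_periodic_of_integral_eq_zero (hg : Function.Periodic g T)
    (hT : 0 < T) (hint : IntervalIntegrable g volume 0 T) (hM : ∀ t, ‖g t‖ ≤ M)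
    (hzero : ∫ t in 0..T, g t = 0) (a b : ℝ) : ‖∫ t in a..b, g t‖ ≤ M * T := by
  have hii := hg.intervalIntegrable₀ hT.ne' hint
  obtain ⟨n, ⟨hle, hlt⟩, -⟩ := existsUnique_add_zsmul_mem_Ico hT b a
  have hperiods : ∫ t in b..b + n • T, g t = 0 := by
    rw [hg.intervalIntegral_add_zsmul_eq n b hii, hg.intervalIntegral_add_eq b 0, zero_add, hzero,
      smul_zero]
  calc ‖∫ t in a..b, g t‖ = ‖∫ t in a..b + n • T, g t‖ := by
        rw [← integral_add_adjacent_intervals (hii a b) (hii b (b + n • T)), hperiods, add_zero]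
    _ ≤ M * |b + n • T - a| := norm_integral_le_of_norm_le_const fun t _ => hM t
    _ ≤ M * T := by
        have hM₀ : 0 ≤ M := (norm_nonneg _).trans (hM 0)
        gcongr
        exact abs_le.2 ⟨by linarith, by linarith⟩

theorem norm_intervalAverage_le_of_norm_le (hM : ∀ t, ‖g t‖ ≤ M) {a b : ℝ} (hab : a ≠ b) :
    ‖⨍ t in a..b, g t‖ ≤ M := by
  have hpos : 0 < |b - a| := abs_pos.2 (sub_ne_zero.2 hab.symm)
  rw [interval_average_eq, norm_smul, norm_inv, norm_eq_abs, inv_mul_le_iff₀ hpos, mul_comm]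
  exact norm_integral_le_of_norm_le_const fun t _ => hM t

theorem norm_intervalAverage_sub_periodAverage_le [CompleteSpace E] (hg : Function.Periodic g T)
    (hT : 0 < T) (hint : IntervalIntegrable g volume 0 T) (hM : ∀ t, ‖g t‖ ≤ M) {a b : ℝ}
    (hab : a ≠ b) :
    ‖(⨍ t in a..b, g t) - ⨍ t in 0..T, g t‖ ≤ 2 * M * T / |b - a| := by
  set m := ⨍ t in 0..T, g t with hm
  have integral_sub_m (x y : ℝ) : ∫ t in x..y, (g t - m) = (∫ t in x..y, g t) - (y - x) • m := by
    rw [integral_sub (hg.intervalIntegrable₀ hT.ne' hint x y) intervalIntegrable_const,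
      intervalIntegral.integral_const]
  have hzero : ∫ t in 0..T, (g t - m) = 0 := by
    rw [integral_sub_m, hm, interval_average_eq, sub_zero, smul_inv_smul₀ hT.ne', sub_self]
  have hbound (t : ℝ) : ‖g t - m‖ ≤ 2 * M := by
    have := norm_sub_le (g t) m
    have := norm_intervalAverage_le_of_norm_le hM hT.ne
    linarith [hM t]
  have hkey := norm_intervalIntegral_le_of_periodic_of_integral_eq_zero
    (fun t => congrArg (· - m) (hg t)) hT (hint.sub intervalIntegrable_const) hbound hzero a b
  have hba : b - a ≠ 0 := sub_ne_zero.2 hab.symm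
  calc ‖(⨍ t in a..b, g t) - m‖ = ‖(b - a)⁻¹ • ∫ t in a..b, (g t - m)‖ := by
        rw [integral_sub_m, smul_sub, inv_smul_smul₀ hba, interval_average_eq]
    _ = ‖∫ t in a..b, (g t - m)‖ / |b - a| := by
        rw [norm_smul, norm_inv, norm_eq_abs, inv_mul_eq_div]
    _ ≤ 2 * M * T / |b - a| := by gcongr

end PeriodicAverage

section CompSin

variable {E : Type*} [NormedAddCommGroup E] [NormedSpace ℝ E]

theorem integral_cos_smul_comp_sin (F : ℝ → E) :
    ∫ θ in 0..2 * π, cos θ • F (sin θ) = 0 := by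
  have hper : Function.Periodic (fun θ => cos θ • F (sin θ)) (2 * π) := fun θ => by
    simp only [cos_add_two_pi, sin_add_two_pi]
  have : IsAddTorsionFree E := .of_isTorsionFree ℝ E
  refine self_eq_neg.1 ?_
  calc ∫ θ in 0..2 * π, cos θ • F (sin θ)
      = ∫ θ in -π..-π + 2 * π, cos θ • F (sin θ) := by
        rw [hper.intervalIntegral_add_eq (-π) 0, zero_add]
    _ = ∫ θ in 0..2 * π, cos (π - θ) • F (sin (π - θ)) := by
        rw [integral_comp_sub_left (fun θ => cos θ • F (sin θ)) π]
        congr 1 <;> ring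
    _ = -∫ θ in 0..2 * π, cos θ • F (sin θ) := by
        simp only [cos_pi_sub, sin_pi_sub, neg_smul, intervalIntegral.integral_neg]

theorem integral_comp_sin_of_even {F : ℝ → E} (hF : Function.Even F)
    (hint : IntervalIntegrable (fun θ => F (sin θ)) volume 0 π) :
    ∫ θ in 0..2 * π, F (sin θ) = (4 : ℝ) • ∫ θ in 0..π / 2, F (sin θ) := by
  have hper : Function.Periodic (fun θ => F (sin θ)) π := fun θ => by
    simp only [sin_add_pi, hF (sin θ)]
  have hii := hper.intervalIntegrable₀ pi_ne_zero hint
  have htwo : ∫ θ in 0..2 * π, F (sin θ) = (2 : ℝ) • ∫ θ in 0..π, F (sin θ) := by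
    rw [← integral_add_adjacent_intervals (hii 0 π) (hii π _), two_mul,
      hper.intervalIntegral_add_eq π 0, zero_add, two_smul]
  have hreflect : ∫ θ in π / 2..π, F (sin θ) = ∫ θ in 0..π / 2, F (sin θ) := by
    have := integral_comp_sub_left (a := 0) (b := π / 2) (fun θ => F (sin θ)) π
    simpa only [sin_pi_sub, sub_zero, sub_half] using this.symm
  rw [htwo, ← integral_add_adjacent_intervals (hii 0 (π / 2)) (hii _ π), hreflect]
  module

end CompSin

/-- The unit vector `R_{-θ} e₂`, so that `b_ε(t)` is its value at `θ = 2πt/ε`. -/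
def rotVec (θ : ℝ) : E2 := !₂[sin θ, cos θ]

theorem bvp_eq_rotVec (ε t : ℝ) : bvp ε t = rotVec (2 * π / ε * t) := by
  rw [div_mul_eq_mul_div]
  rfl

theorem continuous_rotVec : Continuous rotVec := by
  unfold rotVec
  fun_prop

theorem rotVec_periodic : Function.Periodic rotVec (2 * π) := fun θ => by
  simp only [rotVec, sin_add_two_pi, cos_add_two_pi]

theorem norm_rotVec (θ : ℝ) : ‖rotVec θ‖ = 1 := by
  simp [rotVec, EuclideanSpace.norm_eq]

theorem inner_rotVec (α β : ℝ) : ⟪rotVec α, rotVec β⟫ = cos (α - β) := by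
  simp only [rotVec, PiLp.inner_apply, Fin.sum_univ_two, cos_sub]
  simp [mul_comm, add_comm]

theorem rotVec_add (θ ψ : ℝ) :
    rotVec (θ + ψ) = sin θ • rotVec (ψ + π / 2) + cos θ • rotVec ψ := by
  ext i
  fin_cases i
  · simp [rotVec, sin_add]
  · simp [rotVec, cos_add]
    ring

theorem exists_eq_norm_smul_rotVec (z : E2) : ∃ φ : ℝ, z = ‖z‖ • rotVec φ := by
  have hnorm : ‖(⟨z 1, z 0⟩ : ℂ)‖ = ‖z‖ := by
    rw [EuclideanSpace.norm_eq, Complex.norm_def, Complex.normSq_mk]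
    simp [Fin.sum_univ_two, sq, add_comm]
  refine ⟨Complex.arg ⟨z 1, z 0⟩, ?_⟩
  ext i
  fin_cases i
  · simp [rotVec, ← hnorm, Complex.norm_mul_sin_arg]
  · simp [rotVec, ← hnorm, Complex.norm_mul_cos_arg]

theorem fvec_smul_of_norm_eq_one {σ : ℝ → ℝ} (hσ₀ : σ 0 = 0) {r : ℝ} (hr : 0 ≤ r) {u : E2}
    (hu : ‖u‖ = 1) : fvec σ (r • u) = modSat σ r • u := by
  rcases hr.eq_or_lt with rfl | hr
  · simp [fvec, modSat, hσ₀]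
  · have hu₀ : u ≠ 0 := norm_ne_zero_iff.1 (hu ▸ one_ne_zero)
    rw [fvec, if_neg (smul_ne_zero hr.ne' hu₀), norm_smul, hu, mul_one, norm_of_nonneg hr.le,
      smul_smul, div_mul_cancel₀ _ hr.ne']

section Averaging

variable {σ : ℝ → ℝ} {M : ℝ}

theorem intervalIntegrable_comp_smul {E : Type*} [NormedAddCommGroup E] [NormedSpace ℝ E]
    (hσ : Measurable σ) (hM : ∀ ξ, |σ ξ| ≤ M) {u : ℝ → ℝ} (hu : Measurable u) {w : ℝ → E}
    (hw : Continuous w) (a b : ℝ) : IntervalIntegrable (fun t => σ (u t) • w t) volume a b := by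
  have hσu : IntervalIntegrable (fun t => σ (u t)) volume a b :=
    intervalIntegrable_const.mono_fun' (hσ.comp hu).aestronglyMeasurable
      (ae_of_all _ fun t => hM (u t))
  exact hσu.smul_continuousOn hw.continuousOn

theorem integral_sin_mul_comp_sin (hodd : Function.Odd σ) (hσ : Measurable σ)
    (hM : ∀ ξ, |σ ξ| ≤ M) (r : ℝ) :
    ∫ θ in 0..2 * π, sin θ * σ (r * sin θ) = 2 * π * modSat σ r := by
  have heven : Function.Even fun s => s * σ (r * s) := fun s => by
    simp only [mul_neg, hodd (r * s), neg_mul, neg_neg]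
  have hint : IntervalIntegrable (fun θ => sin θ * σ (r * sin θ)) volume 0 π := by
    simpa only [smul_eq_mul, mul_comm] using!
      intervalIntegrable_comp_smul hσ hM (measurable_sin.const_mul r) continuous_sin 0 π
  calc ∫ θ in 0..2 * π, sin θ * σ (r * sin θ)
      = 4 * ∫ θ in 0..π / 2, sin θ * σ (r * sin θ) := integral_comp_sin_of_even heven hint
    _ = 2 * π * modSat σ r := by
        rw [modSat, ← mul_assoc]
        congr 1
        field_simp
        norm_num

theorem integral_comp_sin_smul_rotVec_add (hodd : Function.Odd σ) (hσ : Measurable σ)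
    (hM : ∀ ξ, |σ ξ| ≤ M) (r ψ : ℝ) :
    ∫ θ in 0..2 * π, σ (r * sin θ) • rotVec (θ + ψ) =
      (2 * π * modSat σ r) • rotVec (ψ + π / 2) := by
  have hsplit (θ : ℝ) : σ (r * sin θ) • rotVec (θ + ψ) =
      (sin θ * σ (r * sin θ)) • rotVec (ψ + π / 2) + cos θ • σ (r * sin θ) • rotVec ψ := by
    rw [rotVec_add]
    module
  have hint {w : ℝ → ℝ} (hw : Continuous w) (v : E2) :
      IntervalIntegrable (fun θ => σ (r * sin θ) • w θ • v) volume 0 (2 * π) :=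
    intervalIntegrable_comp_smul hσ hM (measurable_sin.const_mul r) (hw.smul continuous_const) _ _
  simp only [hsplit]
  rw [intervalIntegral.integral_add, intervalIntegral.integral_smul_const,
    integral_sin_mul_comp_sin hodd hσ hM, integral_cos_smul_comp_sin fun s => σ (r * s) • rotVec ψ,
    add_zero]
  · simpa only [smul_smul, mul_comm] using hint continuous_sin (rotVec (ψ + π / 2))
  · simpa only [smul_smul, mul_comm] using hint continuous_cos (rotVec ψ)

theorem integral_smul_rotVec (hodd : Function.Odd σ) (hσ : Measurable σ)
    (hM : ∀ ξ, |σ ξ| ≤ M) (z : E2) :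
    ∫ θ in 0..2 * π, σ ⟪rotVec θ, z⟫ • rotVec θ = (2 * π) • fvec σ z := by
  obtain ⟨φ, hφ⟩ := exists_eq_norm_smul_rotVec z
  obtain ⟨ψ, rfl⟩ : ∃ ψ, ψ + π / 2 = φ := ⟨φ - π / 2, sub_add_cancel _ _⟩
  have hper : Function.Periodic (fun θ => σ ⟪rotVec θ, z⟫ • rotVec θ) (2 * π) := fun θ => by
    simp only [rotVec_periodic θ]
  have hinner (θ : ℝ) : ⟪rotVec (θ + ψ), z⟫ = ‖z‖ * sin θ := by
    conv_lhs => rw [hφ]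
    rw [real_inner_smul_right, inner_rotVec, add_comm θ, add_sub_add_left_eq_sub,
      cos_sub_pi_div_two]
  calc ∫ θ in 0..2 * π, σ ⟪rotVec θ, z⟫ • rotVec θ
      = ∫ θ in 0..2 * π, σ ⟪rotVec (θ + ψ), z⟫ • rotVec (θ + ψ) := by
        rw [integral_comp_add_right (fun θ => σ ⟪rotVec θ, z⟫ • rotVec θ), zero_add,
          add_comm (2 * π), hper.intervalIntegral_add_eq ψ 0, zero_add]
    _ = (2 * π * modSat σ ‖z‖) • rotVec (ψ + π / 2) := by
        simp only [hinner, integral_comp_sin_smul_rotVec_add hodd hσ hM]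
    _ = (2 * π) • fvec σ z := by
        rw [mul_smul, ← fvec_smul_of_norm_eq_one hodd.map_zero (norm_nonneg z) (norm_rotVec _),
          ← hφ]

theorem intervalAverage_bvp (hodd : Function.Odd σ) (hσ : Measurable σ) (hM : ∀ ξ, |σ ξ| ≤ M)
    {ε : ℝ} (hε : ε ≠ 0) (z : E2) :
    ⨍ t in 0..ε, σ ⟪bvp ε t, z⟫ • bvp ε t = fvec σ z := by
  have hk : 2 * π / ε ≠ 0 := div_ne_zero two_pi_pos.ne' hε
  simp only [bvp_eq_rotVec]
  rw [interval_average_eq, integral_comp_mul_left (fun θ => σ ⟪rotVec θ, z⟫ • rotVec θ) hk,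
    mul_zero, div_mul_cancel₀ _ hε, integral_smul_rotVec hodd hσ hM, smul_smul, smul_smul, sub_zero]
  convert one_smul ℝ (fvec σ z)
  field_simp

theorem norm_intervalAverage_bvp_sub_fvec_le (hodd : Function.Odd σ) (hσ : Measurable σ)
    (hM : ∀ ξ, |σ ξ| ≤ M) {ε : ℝ} (hε : 0 < ε) {a c : ℝ} (hac : a ≠ c) (z : E2) :
    ‖(⨍ t in a..c, σ ⟪bvp ε t, z⟫ • bvp ε t) - fvec σ z‖ ≤ 2 * M * ε / |c - a| := by
  have hcont : Continuous (bvp ε) := by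
    simp only [funext (bvp_eq_rotVec ε)]
    exact continuous_rotVec.comp (continuous_const_mul _)
  have hper : Function.Periodic (bvp ε) ε := fun t => by
    rw [bvp_eq_rotVec, bvp_eq_rotVec, mul_add, div_mul_cancel₀ _ hε.ne', rotVec_periodic]
  have hbound (t : ℝ) : ‖σ ⟪bvp ε t, z⟫ • bvp ε t‖ ≤ M := by
    rw [norm_smul, bvp_eq_rotVec, norm_rotVec, mul_one]
    exact hM _
  rw [← intervalAverage_bvp hodd hσ hM hε.ne' z]
  refine norm_intervalAverage_sub_periodAverage_le (fun t => ?_) hε ?_ hbound hac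
  · simp only [hper t]
  · exact intervalIntegrable_comp_smul hσ hM (hcont.inner continuous_const).measurable hcont 0 ε

theorem stmt5_general (hodd : Function.Odd σ) (hσ : Measurable σ) (hM : ∀ ξ, |σ ξ| ≤ M)
    {a c : ℝ} (hac : a ≠ c) :
    ∀ δ > 0, ∃ ε₀ > 0, ∀ ε : ℝ, 0 < ε → ε < ε₀ → ∀ z : E2,
      ‖(c - a)⁻¹ • (∫ t in a..c, σ ⟪bvp ε t, z⟫ • bvp ε t) - fvec σ z‖ ≤ δ := by
  intro δ hδ
  have hM₀ : 0 ≤ M := (abs_nonneg _).trans (hM 0)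
  have hca : 0 < |c - a| := abs_pos.2 (sub_ne_zero.2 hac.symm)
  refine ⟨δ * |c - a| / (2 * M + 1), by positivity, fun ε hε hεε₀ z => ?_⟩
  rw [← interval_average_eq]
  refine (norm_intervalAverage_bvp_sub_fvec_le hodd hσ hM hε hac z).trans ?_
  rw [lt_div_iff₀ (by positivity)] at hεε₀
  rw [div_le_iff₀ hca]
  linarith

end Averaging

namespace IsSaturation

variable {σ : ℝ → ℝ}

theorem odd (hσ : IsSaturation σ) : Function.Odd σ := hσ.1

theorem measurable (hσ : IsSaturation σ) : Measurable σ := by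
  obtain ⟨-, ⟨L, hL⟩, -⟩ := hσ
  exact hL.continuous.measurable

theorem exists_abs_le (hσ : IsSaturation σ) : ∃ M, ∀ ξ, |σ ξ| ≤ M := by
  obtain ⟨hodd, -, -, ⟨l, -, hlim⟩, -, hmono, -⟩ := hσ
  have hle (ξ : ℝ) : σ ξ ≤ l := hmono.ge_of_tendsto hlim ξ
  exact ⟨l, fun ξ => abs_le.2 ⟨neg_le.1 (hodd ξ ▸ hle (-ξ)), hle ξ⟩⟩

end IsSaturation

/-- The averages `(1/(c-a)) ∫_a^c b_ε(t) σ(b_ε(t)ᵀ z) dt` converge to `f(z)` as `ε → 0⁺`,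
uniformly in `z ∈ ℝ²`. -/
theorem stmt5 (σ : ℝ → ℝ) (hσ : IsSaturation σ) (a c : ℝ) (ha : 0 ≤ a) (hac : a < c) :
    ∀ δ > 0, ∃ ε₀ > 0, ∀ ε : ℝ, 0 < ε → ε < ε₀ → ∀ z : E2,
      ‖(c - a)⁻¹ • (∫ t in a..c, σ ⟪bvp ε t, z⟫ • bvp ε t) - fvec σ z‖ ≤ δ := by
  obtain ⟨M, hM⟩ := hσ.exists_abs_le
  exact stmt5_general hσ.odd hσ.measurable hM hac.ne
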